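/- Let α and β be the images of α' and β' in the projective unitary group PU_n = U_n / Z(U_n). The subgroup V_n of PU_n generated by α and β is commutative and isomorphic to (ℤ/n) × (ℤ/n). -/

import Mathlib

/-!
Since `α'β' = ζ⁻¹β'α'`, the commutator `⁅α', β'⁆ = ζ⁻¹ • 1` is central of order `n`, so `α` and `β`
commute. A central commutator is multiplicative in each argument: `⁅α' ^ i, β'⁆ = ζ ^ (-i) • 1`, and
since `α' ^ n = 1`, a power of `α'` commuting with `β'` is trivial; likewise with the roles of `α'`
and `β'` exchanged. Hence `α` and `β` have order `n`, and a common power `α ^ i = β ^ j` is trivial,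
because `α' ^ i` then differs from `β' ^ j` by a central factor and so commutes with `β'`.
-/

open Matrix Complex

/-- `ζ = exp(2πi/n)`. -/
noncomputable def zetaC (n : ℕ) : ℂ := Complex.exp (2 * Real.pi * Complex.I / n)

/-- The cyclic permutation matrix `α'`, with `α'_{ij} = 1` iff `i ≡ j + 1 (mod n)`. -/
noncomputable def alphaM (n : ℕ) : Matrix (Fin n) (Fin n) ℂ :=
  fun i j => if (i : ℕ) = ((j : ℕ) + 1) % n then 1 else 0

/-- The diagonal matrix `β' = diag(ζ, ζ², …, ζ^{n−1}, 1)`. -/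
noncomputable def betaM (n : ℕ) : Matrix (Fin n) (Fin n) ℂ :=
  Matrix.diagonal fun i => zetaC n ^ ((i : ℕ) + 1)

/-- `α'` as an element of the unitary group. -/
noncomputable def aU (n : ℕ) (hA : alphaM n ∈ Matrix.unitaryGroup (Fin n) ℂ) :
    Matrix.unitaryGroup (Fin n) ℂ := ⟨alphaM n, hA⟩

/-- `β'` as an element of the unitary group. -/
noncomputable def bU (n : ℕ) (hB : betaM n ∈ Matrix.unitaryGroup (Fin n) ℂ) :
    Matrix.unitaryGroup (Fin n) ℂ := ⟨betaM n, hB⟩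

/-- The scalar matrix `ζ·I` as an element of the unitary group. -/
noncomputable def sU (n : ℕ)
    (hS : zetaC n • (1 : Matrix (Fin n) (Fin n) ℂ) ∈ Matrix.unitaryGroup (Fin n) ℂ) :
    Matrix.unitaryGroup (Fin n) ℂ := ⟨zetaC n • (1 : Matrix (Fin n) (Fin n) ℂ), hS⟩

/-- `V_n'`, the subgroup of `U_n` generated by `α'` and `β'`. -/
noncomputable def Vgrp (n : ℕ) (hA : alphaM n ∈ Matrix.unitaryGroup (Fin n) ℂ)
    (hB : betaM n ∈ Matrix.unitaryGroup (Fin n) ℂ) :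
    Subgroup (Matrix.unitaryGroup (Fin n) ℂ) :=
  Subgroup.closure {aU n hA, bU n hB}

/-- `W_n`, the subgroup of `U_n` generated by `β'` and the scalar matrix `ζ·I`. -/
noncomputable def Wgrp (n : ℕ) (hB : betaM n ∈ Matrix.unitaryGroup (Fin n) ℂ)
    (hS : zetaC n • (1 : Matrix (Fin n) (Fin n) ℂ) ∈ Matrix.unitaryGroup (Fin n) ℂ) :
    Subgroup (Matrix.unitaryGroup (Fin n) ℂ) :=
  Subgroup.closure {bU n hB, sU n hS}

open scoped commutatorElement

section CommutingSubgroups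

variable {G : Type*} [Group G]

/-- The internal direct product of two subgroups that commute elementwise and meet trivially. -/
noncomputable def prodMulEquivSup (H K : Subgroup G) (hcomm : ∀ h ∈ H, ∀ k ∈ K, Commute h k)
    (hdisj : Disjoint H K) : H × K ≃* (H ⊔ K : Subgroup G) :=
  have hcomm' : ∀ (h : H) (k : K), Commute (H.subtype h) (K.subtype k) :=
    fun h k => hcomm h h.2 k k.2
  have hinj : Function.Injective (H.subtype.noncommCoprod K.subtype hcomm') := by
    rw [MonoidHom.noncommCoprod_injective, H.range_subtype, K.range_subtype]
    exact ⟨H.subtype_injective, K.subtype_injective, hdisj⟩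
  have hrange : (H.subtype.noncommCoprod K.subtype hcomm').range = H ⊔ K := by
    rw [MonoidHom.noncommCoprod_range, H.range_subtype, K.range_subtype]
  (MonoidHom.ofInjective hinj).trans (MulEquiv.subgroupCongr hrange)

theorem closure_pair_eq_zpowers_sup_zpowers (x y : G) :
    Subgroup.closure {x, y} = Subgroup.zpowers x ⊔ Subgroup.zpowers y := by
  rw [Set.insert_eq, Subgroup.closure_union, Subgroup.zpowers_eq_closure,
    Subgroup.zpowers_eq_closure]

/-- The isomorphism of `ℤ/n` with the cyclic group generated by an element of order `n`, sending
`1` to that element. -/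
noncomputable def zmodMulEquivZPowers {x : G} {n : ℕ} (hx : orderOf x = n) :
    Multiplicative (ZMod n) ≃* Subgroup.zpowers x :=
  zmodMulEquivOfGenerator (g := ⟨x, Subgroup.mem_zpowers x⟩)
    (fun ⟨_, i, hi⟩ => ⟨i, Subtype.ext hi⟩) ((Nat.card_zpowers x).trans hx)

/-- The identification of the group generated by two commuting elements of orders `m` and `n`,
whose cyclic groups meet trivially, with `(ℤ/m) × (ℤ/n)`. -/
noncomputable def closurePairMulEquiv {x y : G} {m n : ℕ} (hxy : Commute x y)
    (hdisj : Disjoint (Subgroup.zpowers x) (Subgroup.zpowers y))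
    (hx : orderOf x = m) (hy : orderOf y = n) :
    Subgroup.closure {x, y} ≃* Multiplicative (ZMod m × ZMod n) :=
  have hcomm : ∀ g ∈ Subgroup.zpowers x, ∀ h ∈ Subgroup.zpowers y, Commute g h := by
    rintro _ ⟨i, rfl⟩ _ ⟨j, rfl⟩
    exact hxy.zpow_zpow i j
  (MulEquiv.subgroupCongr (closure_pair_eq_zpowers_sup_zpowers x y)).trans <|
    (prodMulEquivSup _ _ hcomm hdisj).symm.trans <|
      ((zmodMulEquivZPowers hx).prodCongr (zmodMulEquivZPowers hy)).symm.trans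
        (MulEquiv.prodMultiplicative (ZMod m) (ZMod n)).symm

theorem mul_comm_of_mem_closure_pair {x y g h : G} (hxy : Commute x y)
    (hg : g ∈ Subgroup.closure {x, y}) (hh : h ∈ Subgroup.closure {x, y}) : g * h = h * g := by
  have : IsMulCommutative (Subgroup.closure {x, y}) := by
    refine Subgroup.isMulCommutative_closure ?_
    rintro _ (rfl | rfl) _ (rfl | rfl)
    exacts [rfl, hxy, hxy.symm, rfl]
  exact setLike_mul_comm hg hh

end CommutingSubgroups

section CentralCommutator

variable {G : Type*} [Group G] {a b : G}

theorem commutatorElement_zpow_left (h : Commute a ⁅a, b⁆) (i : ℤ) : ⁅a ^ i, b⁆ = ⁅a, b⁆ ^ i := by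
  have hmul : ⁅a, b⁆ = a * (b * a⁻¹ * b⁻¹) := by rw [commutatorElement_def]; group
  have hconj : Commute a (b * a⁻¹ * b⁻¹) := by
    simpa [hmul] using (Commute.refl a).inv_right.mul_right h
  calc ⁅a ^ i, b⁆ = a ^ i * (b * (a⁻¹) ^ i * b⁻¹) := by
        rw [commutatorElement_def, _root_.inv_zpow]; group
    _ = a ^ i * (b * a⁻¹ * b⁻¹) ^ i := by rw [conj_zpow]
    _ = ⁅a, b⁆ ^ i := by rw [hmul, hconj.mul_zpow]

theorem commute_zpow_left_iff_orderOf_dvd (h : Commute a ⁅a, b⁆) (i : ℤ) :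
    Commute (a ^ i) b ↔ (orderOf ⁅a, b⁆ : ℤ) ∣ i := by
  rw [← commutatorElement_eq_one_iff_commute, commutatorElement_zpow_left h,
    orderOf_dvd_iff_zpow_eq_one]

theorem zpow_mem_center_iff_commute (hc : ⁅a, b⁆ ∈ Subgroup.center G)
    (ha : a ^ orderOf ⁅a, b⁆ ∈ Subgroup.center G) (i : ℤ) :
    a ^ i ∈ Subgroup.center G ↔ Commute (a ^ i) b := by
  refine ⟨fun hi => (Subgroup.mem_center_iff.1 hi b).symm, fun hi => ?_⟩
  obtain ⟨k, rfl⟩ :=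
    (commute_zpow_left_iff_orderOf_dvd (Subgroup.mem_center_iff.1 hc a) i).1 hi
  rw [_root_.zpow_mul, zpow_natCast]
  exact zpow_mem ha k

theorem orderOf_mk_center (hc : ⁅a, b⁆ ∈ Subgroup.center G)
    (ha : a ^ orderOf ⁅a, b⁆ ∈ Subgroup.center G) :
    orderOf (a : G ⧸ Subgroup.center G) = orderOf ⁅a, b⁆ := by
  refine Nat.dvd_right_iff_eq.1 fun k => ?_
  rw [orderOf_dvd_iff_pow_eq_one, ← QuotientGroup.mk_pow, QuotientGroup.eq_one_iff,
    ← zpow_natCast, zpow_mem_center_iff_commute hc ha,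
    commute_zpow_left_iff_orderOf_dvd (Subgroup.mem_center_iff.1 hc a), Int.natCast_dvd_natCast]

theorem disjoint_zpowers_mk_center (hc : ⁅a, b⁆ ∈ Subgroup.center G)
    (ha : a ^ orderOf ⁅a, b⁆ ∈ Subgroup.center G) :
    Disjoint (Subgroup.zpowers (a : G ⧸ Subgroup.center G))
      (Subgroup.zpowers (b : G ⧸ Subgroup.center G)) := by
  rw [Subgroup.disjoint_def]
  rintro _ ⟨i, rfl⟩ ⟨j, hj : (b : G ⧸ Subgroup.center G) ^ j = a ^ i⟩
  have hmem : (b ^ j)⁻¹ * a ^ i ∈ Subgroup.center G := by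
    rwa [← QuotientGroup.eq, QuotientGroup.mk_zpow, QuotientGroup.mk_zpow]
  have hcomm : Commute b (b ^ j * ((b ^ j)⁻¹ * a ^ i)) :=
    (Commute.self_zpow b j).mul_right (Subgroup.mem_center_iff.1 hmem b)
  rw [mul_inv_cancel_left] at hcomm
  exact (QuotientGroup.eq_one_iff _).2 ((zpow_mem_center_iff_commute hc ha i).2 hcomm.symm)

theorem commute_mk_center (hc : ⁅a, b⁆ ∈ Subgroup.center G) :
    Commute (a : G ⧸ Subgroup.center G) (b : G ⧸ Subgroup.center G) :=
  commutatorElement_eq_one_iff_commute.1 ((QuotientGroup.eq_one_iff ⁅a, b⁆).2 hc)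

/-- If `⁅a, b⁆` is central of order `n` and so are `a ^ n` and `b ^ n`, then `a` and `b` generate
`(ℤ/n) × (ℤ/n)` modulo the center. -/
noncomputable def closureMkCenterMulEquiv {n : ℕ} (hc : ⁅a, b⁆ ∈ Subgroup.center G)
    (hn : orderOf ⁅a, b⁆ = n) (ha : a ^ n ∈ Subgroup.center G) (hb : b ^ n ∈ Subgroup.center G) :
    Subgroup.closure {(a : G ⧸ Subgroup.center G), (b : G ⧸ Subgroup.center G)} ≃*
      Multiplicative (ZMod n × ZMod n) :=
  have hc' : ⁅b, a⁆ ∈ Subgroup.center G := commutatorElement_inv a b ▸ inv_mem hc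
  have hn' : orderOf ⁅b, a⁆ = n := by rw [← commutatorElement_inv, orderOf_inv, hn]
  closurePairMulEquiv (commute_mk_center hc) (disjoint_zpowers_mk_center hc (hn.symm ▸ ha))
    ((orderOf_mk_center hc (hn.symm ▸ ha)).trans hn)
    ((orderOf_mk_center hc' (hn'.symm ▸ hb)).trans hn')

end CentralCommutator

section UnitaryScalars

variable {m R : Type*} [Fintype m] [DecidableEq m] [CommRing R] [StarRing R]
  {u v : Matrix.unitaryGroup m R} {c : R}

theorem coe_commutatorElement_eq_smul_one
    (h : (u : Matrix m m R) * v = c • ((v : Matrix m m R) * u)) :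
    ((⁅u, v⁆ : Matrix.unitaryGroup m R) : Matrix m m R) = c • 1 := by
  calc ((⁅u, v⁆ : Matrix.unitaryGroup m R) : Matrix m m R)
      = (u : Matrix m m R) * v * ((v * u)⁻¹ : Matrix.unitaryGroup m R) := by
        rw [commutatorElement_def, mul_assoc, ← _root_.mul_inv_rev]; rfl
    _ = c • ((v * u * (v * u)⁻¹ : Matrix.unitaryGroup m R) : Matrix m m R) := by
        rw [h, smul_mul_assoc]; rfl
    _ = c • 1 := by rw [mul_inv_cancel]; rfl

theorem mem_center_of_coe_eq_smul_one (h : (u : Matrix m m R) = c • 1) :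
    u ∈ Subgroup.center (Matrix.unitaryGroup m R) := by
  refine Subgroup.mem_center_iff.2 fun g => Subtype.ext ?_
  rw [Submonoid.coe_mul, Submonoid.coe_mul, h, mul_smul_one, smul_one_mul]

theorem orderOf_eq_of_coe_eq_smul_one [Nonempty m] (h : (u : Matrix m m R) = c • 1) :
    orderOf u = orderOf c := by
  rw [← orderOf_submonoid, h, Matrix.smul_one_eq_diagonal]
  exact orderOf_injective (Matrix.scalar m).toMonoidHom (fun _ _ => Matrix.scalar_inj.1) c

end UnitaryScalars

theorem isPrimitiveRoot_zetaC {n : ℕ} (hn : n ≠ 0) : IsPrimitiveRoot (zetaC n) n :=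
  Complex.isPrimitiveRoot_exp n hn

theorem zetaC_pow_self (n : ℕ) : zetaC n ^ n = 1 := by
  rcases eq_or_ne n 0 with rfl | hn
  · exact pow_zero _
  · exact (isPrimitiveRoot_zetaC hn).pow_eq_one

theorem zetaC_ne_zero (n : ℕ) : zetaC n ≠ 0 :=
  Complex.exp_ne_zero _

theorem alphaM_mul_betaM (n : ℕ) :
    alphaM n * betaM n = (zetaC n)⁻¹ • (betaM n * alphaM n) := by
  ext i j
  rw [Matrix.smul_apply, betaM, Matrix.mul_diagonal, Matrix.diagonal_mul, alphaM, smul_eq_mul]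
  split_ifs with hij
  · have hpow : zetaC n ^ (i : ℕ) = zetaC n ^ ((j : ℕ) + 1) := by
      rw [hij, ← pow_eq_pow_mod _ (zetaC_pow_self n)]
    rw [one_mul, mul_one, pow_succ' _ (i : ℕ), inv_mul_cancel_left₀ (zetaC_ne_zero n), hpow]
  · simp only [zero_mul, mul_zero]

theorem alphaM_eq_permMatrixHom_finRotate (n : ℕ) :
    alphaM n = Matrix.permMatrixHom (R := ℂ) (finRotate n) := by
  ext i j
  have := i.neZero
  have hij : (i : ℕ) = ((j : ℕ) + 1) % n ↔ (finRotate n).symm i = j := by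
    rw [finRotate_symm_apply, sub_eq_iff_eq_add, Fin.ext_iff, Fin.val_add, Fin.val_one',
      Nat.add_mod_mod]
  simp [alphaM, PEquiv.toMatrix_apply, hij]

theorem finRotate_pow_self (n : ℕ) : finRotate n ^ n = 1 := by
  obtain hn | hn := lt_or_ge n 2
  · have : Subsingleton (Fin n) := Fin.subsingleton_iff_le_one.2 (Nat.lt_succ_iff.1 hn)
    exact Subsingleton.elim _ _
  · rw [← orderOf_dvd_iff_pow_eq_one, ← Equiv.Perm.lcm_cycleType, cycleType_finRotate_of_le hn,
      Multiset.lcm_singleton, normalize_eq]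

theorem alphaM_pow_self (n : ℕ) : alphaM n ^ n = 1 := by
  rw [alphaM_eq_permMatrixHom_finRotate, ← map_pow, finRotate_pow_self, map_one]

theorem betaM_pow_self (n : ℕ) : betaM n ^ n = 1 := by
  rw [betaM, Matrix.diagonal_pow, Matrix.diagonal_eq_one]
  funext i
  rw [Pi.pow_apply, Pi.one_apply, pow_right_comm, zetaC_pow_self, one_pow]

/-- the subgroup `V_n` of `PU_n` generated by the images `α`, `β` of `α'`, `β'`
is commutative and isomorphic to `(ℤ/n) × (ℤ/n)`. -/
theorem Vbar_comm_and_iso (n : ℕ) (hn : 1 < n)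
    (hA : alphaM n ∈ Matrix.unitaryGroup (Fin n) ℂ)
    (hB : betaM n ∈ Matrix.unitaryGroup (Fin n) ℂ) :
    (∀ x ∈ Subgroup.closure
        {QuotientGroup.mk' (Subgroup.center (Matrix.unitaryGroup (Fin n) ℂ)) (aU n hA),
         QuotientGroup.mk' (Subgroup.center (Matrix.unitaryGroup (Fin n) ℂ)) (bU n hB)},
      ∀ y ∈ Subgroup.closure
        {QuotientGroup.mk' (Subgroup.center (Matrix.unitaryGroup (Fin n) ℂ)) (aU n hA),
         QuotientGroup.mk' (Subgroup.center (Matrix.unitaryGroup (Fin n) ℂ)) (bU n hB)},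
      x * y = y * x) ∧
    Nonempty ((Subgroup.closure
        {QuotientGroup.mk' (Subgroup.center (Matrix.unitaryGroup (Fin n) ℂ)) (aU n hA),
         QuotientGroup.mk' (Subgroup.center (Matrix.unitaryGroup (Fin n) ℂ)) (bU n hB)}) ≃*
      Multiplicative (ZMod n × ZMod n)) := by
  have : Nonempty (Fin n) := ⟨⟨0, by lia⟩⟩
  have hscalar :=
    coe_commutatorElement_eq_smul_one (u := aU n hA) (v := bU n hB) (alphaM_mul_betaM n)
  have hcenter := mem_center_of_coe_eq_smul_one hscalar
  have horder : orderOf ⁅aU n hA, bU n hB⁆ = n := by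
    rw [orderOf_eq_of_coe_eq_smul_one hscalar]
    exact (isPrimitiveRoot_zetaC (by lia)).inv.eq_orderOf.symm
  have hα : aU n hA ^ n = 1 := Subtype.ext (alphaM_pow_self n)
  have hβ : bU n hB ^ n = 1 := Subtype.ext (betaM_pow_self n)
  exact ⟨fun x hx y hy => mul_comm_of_mem_closure_pair (commute_mk_center hcenter) hx hy,
    ⟨closureMkCenterMulEquiv hcenter horder (hα ▸ one_mem _) (hβ ▸ one_mem _)⟩⟩
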